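/- The number of 3-stack sortable permutations of length n satisfies W_3(n) ≤ Σ_{k=1}^{⌊(n+1)/2⌋} W_2(n, k−1) · binomial(2n−2k, n−1), where W_2(n, k−1) = (n+k−1)!(2n−k)!/(k!(n+1−k)!(2k−1)!(2n−2k+1)!). -/

import Mathlib

open Finset Nat

def push (x : ℕ) : List ℕ → List ℕ → List ℕ × List ℕ
  | [], out => ([x], out)
  | t :: s, out => if t < x then push x s (out ++ [t]) else (x :: t :: s, out)

def sortAux : List ℕ → List ℕ → List ℕ → List ℕ
  | [], stack, out => out ++ stack
  | x :: xs, stack, out =>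
      let r := push x stack out
      sortAux xs r.1 r.2

/-- The stack sorting map `s`: `s(∅) = ∅` and `s(L n R) = s(L) s(R) n` with `n` maximal. -/
def stackSort (p : List ℕ) : List ℕ := sortAux p [] []

theorem push_spec {m : ℕ} (x : ℕ) (st out : List ℕ) (hx : x < m) (hst : ∀ y ∈ st, y < m) :
    ∀ y ∈ (push x st out).1, y < m := by
  induction st generalizing out with
  | nil => simpa [push] using hx
  | cons t st ih =>
    rw [push]
    split_ifs
    · exact ih _ fun y hy => hst y (List.mem_cons_of_mem _ hy)
    · intro y hy
      rcases List.mem_cons.1 hy with rfl | hy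
      exacts [hx, hst y hy]

theorem push_of_lt {m : ℕ} (st out : List ℕ) (hst : ∀ y ∈ st, y < m) :
    push m st out = ([m], out ++ st) := by
  induction st generalizing out with
  | nil => simp [push]
  | cons t st ih =>
    rw [push, if_pos (hst t (by simp)), ih _ fun y hy => hst y (List.mem_cons_of_mem _ hy)]
    simp

theorem push_append_bottom {m x : ℕ} (st out : List ℕ) (hx : x < m) :
    push x (st ++ [m]) out = ((push x st out).1 ++ [m], (push x st out).2) := by
  induction st generalizing out with
  | nil => simp [push, hx.le]
  | cons t st ih =>
    simp only [List.cons_append, push]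
    split_ifs
    · exact ih _
    · simp

theorem push_append_out (x : ℕ) (st o out : List ℕ) :
    push x st (o ++ out) = ((push x st out).1, o ++ (push x st out).2) := by
  induction st generalizing out with
  | nil => simp [push]
  | cons t st ih =>
    simp only [push]
    split_ifs
    · rw [List.append_assoc, ih]
    · simp

theorem sortAux_append_out (xs st o out : List ℕ) :
    sortAux xs st (o ++ out) = o ++ sortAux xs st out := by
  induction xs generalizing st out with
  | nil => simp [sortAux]
  | cons x xs ih => simp only [sortAux, push_append_out, ih]

theorem sortAux_append_bottom {m : ℕ} (xs st out : List ℕ) (hxs : ∀ x ∈ xs, x < m) :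
    sortAux xs (st ++ [m]) out = sortAux xs st out ++ [m] := by
  induction xs generalizing st out with
  | nil => simp [sortAux]
  | cons x xs ih =>
    simp only [sortAux, push_append_bottom st out (hxs x (by simp))]
    exact ih _ _ fun y hy => hxs y (List.mem_cons_of_mem _ hy)

theorem sortAux_append_cons {m : ℕ} (L R st out : List ℕ) (hL : ∀ x ∈ L, x < m)
    (hst : ∀ x ∈ st, x < m) :
    sortAux (L ++ m :: R) st out = sortAux R [m] (sortAux L st out) := by
  induction L generalizing st out with
  | nil => simp [sortAux, push_of_lt st out hst]
  | cons x L ih =>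
    simp only [List.cons_append, sortAux]
    exact ih _ _ (fun y hy => hL y (List.mem_cons_of_mem _ hy))
      (push_spec x st out (hL x (by simp)) hst)

theorem stackSort_append_cons {m : ℕ} {L R : List ℕ} (hL : ∀ x ∈ L, x < m) (hR : ∀ x ∈ R, x < m) :
    stackSort (L ++ m :: R) = stackSort L ++ stackSort R ++ [m] := by
  rw [stackSort, sortAux_append_cons L R [] [] hL (by simp)]
  have h := sortAux_append_out R [m] (sortAux L [] []) []
  have h' := sortAux_append_bottom R [] [] hR
  simp only [List.append_nil, List.nil_append] at h h'
  rw [h, h', stackSort, stackSort, List.append_assoc]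

theorem List.Nodup.max_induction {P : List ℕ → Prop} (nil : P [])
    (node : ∀ L m R, (∀ x ∈ L, x < m) → (∀ x ∈ R, x < m) → L.Nodup → R.Nodup →
      P L → P R → P (L ++ m :: R)) (p : List ℕ) (hp : p.Nodup) : P p := by
  induction hn : p.length using Nat.strong_induction_on generalizing p with
  | _ n ih =>
    rcases eq_or_ne p [] with rfl | hne
    · exact nil
    obtain ⟨m, hm, hmax⟩ := p.toFinset.exists_max_image id
      ((List.toFinset_nonempty_iff p).2 hne)
    obtain ⟨L, R, rfl⟩ := List.append_of_mem (List.mem_toFinset.1 hm)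
    simp only [id, List.mem_toFinset] at hmax
    rw [List.nodup_append, List.nodup_cons] at hp
    obtain ⟨h1, ⟨h2, h3⟩, h4⟩ := hp
    simp only [List.length_append, List.length_cons] at hn
    refine node L m R (fun x hx => ?_) (fun x hx => ?_) h1 h3
      (ih _ (by omega) L h1 rfl) (ih _ (by omega) R h3 rfl)
    · exact lt_of_le_of_ne (hmax x (by simp [hx])) (h4 x hx m (by simp))
    · exact lt_of_le_of_ne (hmax x (by simp [hx])) (fun h => h2 (h ▸ hx))

theorem stackSort_perm {p : List ℕ} (hp : p.Nodup) : (stackSort p).Perm p := by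
  refine List.Nodup.max_induction (P := fun p => (stackSort p).Perm p) ?_ ?_ p hp
  · rfl
  · intro L m R hL hR _ _ ihL ihR
    rw [stackSort_append_cons hL hR, List.append_assoc]
    exact ihL.append ((List.perm_append_singleton m _).trans (ihR.cons m))

/-- The list `w` has no subsequence `b c a` with `a < b < c`. -/
def Avoids231 (w : List ℕ) : Prop :=
  ∀ b c a, [b, c, a].Sublist w → a < b → b < c → False

theorem Avoids231.sublist {v w : List ℕ} (hw : Avoids231 w) (h : v.Sublist w) : Avoids231 v :=
  fun b c a hs => hw b c a (hs.trans h)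

theorem avoids231_of_stackSort_sorted {w : List ℕ} (hw : w.Nodup)
    (h : (stackSort w).Pairwise (· < ·)) : Avoids231 w := by
  revert h
  refine List.Nodup.max_induction
    (P := fun w => (stackSort w).Pairwise (· < ·) → Avoids231 w) ?_ ?_ w hw
  · intro _ b c a hs
    simp at hs
  · intro L m R hL hR hLn hRn ihL ihR h b c a hs hab hbc
    rw [stackSort_append_cons hL hR, List.append_assoc, List.pairwise_append,
      List.pairwise_append] at h
    obtain ⟨h1, ⟨h2, -, -⟩, h3⟩ := h
    have hlt : ∀ x ∈ L, ∀ y ∈ R, x < y := fun x hx y hy =>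
      h3 x ((stackSort_perm hLn).mem_iff.2 hx) y
        (List.mem_append_left _ ((stackSort_perm hRn).mem_iff.2 hy))
    rw [List.sublist_append_iff] at hs
    obtain ⟨l₁, l₂, he, hs₁, hs₂⟩ := hs
    match l₁, he with
    | [], he =>
      simp only [List.nil_append] at he
      subst he
      rcases List.sublist_cons_iff.1 hs₂ with hs₂ | ⟨r, hr, hs₂⟩
      · exact ihR h2 b c a hs₂ hab hbc
      · simp only [List.cons.injEq] at hr
        obtain ⟨rfl, rfl⟩ := hr
        exact absurd (hR c (hs₂.subset (by simp))) (by omega)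
    | [_], he =>
      simp only [List.cons_append, List.nil_append, List.cons.injEq] at he
      obtain ⟨rfl, rfl⟩ := he
      have hb := hs₁.subset (List.mem_singleton_self _)
      rcases List.mem_cons.1 (hs₂.subset (show a ∈ [c, a] by simp)) with rfl | ha
      · exact absurd (hL b hb) (by omega)
      · exact absurd (hlt b hb a ha) (by omega)
    | [_, _], he =>
      simp only [List.cons_append, List.nil_append, List.cons.injEq] at he
      obtain ⟨rfl, rfl, rfl⟩ := he
      have hb := hs₁.subset (show b ∈ [b, c] by simp)
      rcases List.mem_cons.1 (hs₂.subset (List.mem_singleton_self _)) with rfl | ha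
      · exact absurd (hL b hb) (by omega)
      · exact absurd (hlt b hb a ha) (by omega)
    | [_, _, _], he =>
      simp only [List.cons_append, List.nil_append, List.cons.injEq] at he
      obtain ⟨rfl, rfl, rfl, -⟩ := he
      exact ihL h1 b c a hs₁ hab hbc
    | _ :: _ :: _ :: _ :: _, he => simp at he

/-- One more than the number of descents, with value `0` on the empty word. -/
def runCount : List ℕ → ℕ
  | [] => 0
  | [_] => 1
  | x :: y :: t => runCount (y :: t) + if y < x then 1 else 0

theorem runCount_cons_of_lt {m : ℕ} {R : List ℕ} (hR : ∀ x ∈ R, x < m) :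
    runCount (m :: R) = runCount R + 1 := by
  cases R with
  | nil => rfl
  | cons y t => rw [runCount, if_pos (hR y (by simp))]

theorem runCount_append_cons {m : ℕ} {L R : List ℕ} (hL : ∀ x ∈ L, x < m) (hR : ∀ x ∈ R, x < m) :
    runCount (L ++ m :: R) = runCount L + runCount R + if L = [] then 1 else 0 := by
  induction L with
  | nil => simp [runCount_cons_of_lt hR, runCount]
  | cons x L ih =>
    cases L with
    | nil => simp [runCount, runCount_cons_of_lt hR, (hL x (by simp)).le, add_comm]
    | cons y t =>
      have := ih fun z hz => hL z (List.mem_cons_of_mem _ hz)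
      simp only [List.cons_append, runCount, reduceCtorEq, if_false] at this ⊢
      omega

/-- The least possible numbers of pushes before the pops of the letters of a word,
given that `x` has just been popped. -/
def minPushAfter : ℕ → List ℕ → List ℕ
  | _, [] => []
  | x, y :: t => (if y < x then 2 else 0) :: minPushAfter y t

/-- The least possible numbers of pushes before the pops of the letters of a sorted word. -/
def minPush : List ℕ → List ℕ
  | [] => []
  | y :: t => 1 :: minPushAfter y t

theorem length_minPushAfter (x : ℕ) (t : List ℕ) : (minPushAfter x t).length = t.length := by
  induction t generalizing x with
  | nil => rfl
  | cons y t ih => simp [minPushAfter, ih]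

theorem length_minPush (t : List ℕ) : (minPush t).length = t.length := by
  cases t <;> simp [minPush, length_minPushAfter]

theorem sum_minPushAfter (x : ℕ) (t : List ℕ) :
    (minPushAfter x t).sum + 2 = 2 * runCount (x :: t) := by
  induction t generalizing x with
  | nil => rfl
  | cons y t ih =>
    have := ih y
    simp only [minPushAfter, runCount, List.sum_cons]
    split_ifs <;> omega

theorem sum_minPush {q : List ℕ} (hq : q ≠ []) : (minPush q).sum + 1 = 2 * runCount q := by
  cases q with
  | nil => exact absurd rfl hq
  | cons y t =>
    rw [← sum_minPushAfter, minPush, List.sum_cons]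
    ring

theorem minPushAfter_concat_le {c m : ℕ} {t v : List ℕ} (hc : c < m) (ht : ∀ x ∈ t, x < m)
    (h : List.Forall₂ (· ≤ ·) (minPushAfter c t) v) :
    List.Forall₂ (· ≤ ·) (minPushAfter c (t ++ [m])) (v ++ [0]) := by
  induction t generalizing c v with
  | nil =>
    simp only [minPushAfter, List.forall₂_nil_left_iff] at h
    subst h
    simpa [minPushAfter] using hc.le
  | cons y t ih =>
    simp only [minPushAfter, List.forall₂_cons_left_iff] at h
    obtain ⟨b, u, hb, hu, rfl⟩ := h
    simp only [minPushAfter, List.cons_append]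
    exact List.Forall₂.cons hb
      (ih (ht y (by simp)) (fun z hz => ht z (List.mem_cons_of_mem _ hz)) hu)

theorem minPushAfter_append_le {y c e : ℕ} {A t u v : List ℕ}
    (hA : List.Forall₂ (· ≤ ·) (minPushAfter y A) u)
    (ht : List.Forall₂ (· ≤ ·) (minPushAfter c t) v)
    (he : 2 ≤ e ∨ (y < c ∧ ∀ x ∈ A, x < c)) :
    List.Forall₂ (· ≤ ·) (minPushAfter y (A ++ c :: t)) (u ++ e :: v) := by
  induction A generalizing y u with
  | nil =>
    simp only [minPushAfter, List.forall₂_nil_left_iff] at hA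
    subst hA
    simp only [minPushAfter, List.nil_append]
    refine List.Forall₂.cons ?_ ht
    split_ifs <;> omega
  | cons z A ih =>
    simp only [minPushAfter, List.forall₂_cons_left_iff] at hA
    obtain ⟨b, w, hb, hw, rfl⟩ := hA
    simp only [minPushAfter, List.cons_append]
    refine List.Forall₂.cons hb (ih hw (he.imp_right fun h => ?_))
    exact ⟨h.2 z (by simp), fun x hx => h.2 x (List.mem_cons_of_mem _ hx)⟩

theorem minPush_append_le {c e : ℕ} {A t u v : List ℕ}
    (hA : List.Forall₂ (· ≤ ·) (minPush A) u)
    (ht : List.Forall₂ (· ≤ ·) (minPushAfter c t) v)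
    (he₁ : 1 ≤ e) (he : 2 ≤ e ∨ ∀ x ∈ A, x < c) :
    List.Forall₂ (· ≤ ·) (minPush (A ++ c :: t)) (u ++ e :: v) := by
  cases A with
  | nil =>
    simp only [minPush, List.forall₂_nil_left_iff] at hA
    subst hA
    exact List.Forall₂.cons he₁ ht
  | cons y A =>
    simp only [minPush, List.forall₂_cons_left_iff] at hA
    obtain ⟨b, w, hb, hw, rfl⟩ := hA
    simp only [minPush, List.cons_append]
    refine List.Forall₂.cons hb (minPushAfter_append_le hw ht (he.imp_right fun h => ?_))
    exact ⟨h y (by simp), fun x hx => h x (List.mem_cons_of_mem _ hx)⟩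

/-- Run the stack backwards: a pair `(a, x)` stands for `a` pushes followed by the pop of `x`.
The result consists of the stack contents before the word is read and the letters it pushes. -/
def unsortAux : List (ℕ × ℕ) → List ℕ × List ℕ
  | [] => ([], [])
  | (a, x) :: w =>
    ((x :: (unsortAux w).1).drop a, ((x :: (unsortAux w).1).take a).reverse ++ (unsortAux w).2)

theorem unsortAux_succ {a b m : ℕ} {w st out : List _}
    (h : unsortAux ((a, b) :: w) = (m :: st, out)) :
    unsortAux ((a + 1, b) :: w) = (st, m :: out) := by
  simp only [unsortAux, Prod.mk.injEq] at h ⊢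
  obtain ⟨h₁, rfl⟩ := h
  refine ⟨by rw [← List.drop_drop, h₁]; rfl, ?_⟩
  rw [List.take_add, h₁]
  simp

theorem exists_stackWord {p : List ℕ} (hp : p.Nodup) :
    ∃ w : List (ℕ × ℕ), w.map Prod.snd = stackSort p ∧ (w.map Prod.fst).sum = p.length ∧
      List.Forall₂ (· ≤ ·) (minPush (stackSort p)) (w.map Prod.fst) ∧
      ∀ w', unsortAux (w ++ w') = ((unsortAux w').1, p ++ (unsortAux w').2) := by
  refine List.Nodup.max_induction (P := fun p => ∃ w : List (ℕ × ℕ),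
      w.map Prod.snd = stackSort p ∧ (w.map Prod.fst).sum = p.length ∧
      List.Forall₂ (· ≤ ·) (minPush (stackSort p)) (w.map Prod.fst) ∧
      ∀ w', unsortAux (w ++ w') = ((unsortAux w').1, p ++ (unsortAux w').2)) ?_ ?_ p hp
  · exact ⟨[], rfl, rfl, List.Forall₂.nil, fun w' => rfl⟩
  · rintro L m R hL hR hLn hRn ⟨v, hv₁, hv₂, hv₃, hv₄⟩ ⟨w, hw₁, hw₂, hw₃, hw₄⟩
    rw [stackSort_append_cons hL hR]
    have hL' : ∀ x ∈ stackSort L, x < m := fun x hx => hL x ((stackSort_perm hLn).mem_iff.1 hx)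
    have hR' : ∀ x ∈ stackSort R, x < m := fun x hx => hR x ((stackSort_perm hRn).mem_iff.1 hx)
    cases w with
    | nil =>
      have hRe : R = [] := by
        have := (stackSort_perm hRn).length_eq
        rw [← hw₁] at this
        exact List.eq_nil_of_length_eq_zero this.symm
      subst hRe
      refine ⟨v ++ [(1, m)], ?_, ?_, ?_, fun w' => ?_⟩
      · simp [hv₁, ← hw₁]
      · simp [hv₂]
      · rw [← hw₁]
        simpa using minPush_append_le hv₃ (c := m) (t := []) (e := 1) List.Forall₂.nil le_rfl
          (Or.inr hL')
      · rw [List.append_assoc, hv₄]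
        simp [unsortAux]
    | cons z w =>
      obtain ⟨a, b⟩ := z
      simp only [List.map_cons] at hw₁ hw₂ hw₃
      rw [← hw₁] at hw₃ hR' ⊢
      simp only [minPush, List.forall₂_cons] at hw₃
      refine ⟨v ++ ((a + 1, b) :: w ++ [(0, m)]), ?_, ?_, ?_, fun w' => ?_⟩
      · simp [hv₁]
      · simp only [List.map_append, List.map_cons, List.map_nil, List.sum_append, List.sum_cons,
          List.sum_nil, List.length_append, List.length_cons, hv₂] at hw₂ ⊢
        omega
      · rw [List.append_assoc]
        simp only [List.map_append, List.map_cons, List.cons_append, List.map_nil]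
        exact minPush_append_le hv₃ (minPushAfter_concat_le (hR' b (by simp))
          (fun x hx => hR' x (List.mem_cons_of_mem _ hx)) hw₃.2) (by omega) (Or.inl (by omega))
      · rw [List.append_assoc, hv₄]
        have h := hw₄ ([(0, m)] ++ w')
        have h' := unsortAux_succ (m := m) (st := (unsortAux w').1) (out := R ++ (unsortAux w').2)
          (a := a) (b := b) (w := w ++ ([(0, m)] ++ w')) (by
            rw [List.cons_append] at h
            rw [h]
            simp [unsortAux])
        rw [List.append_assoc, List.cons_append, h']
        simp

theorem exists_zipWith_add_of_forall₂_le {e a : List ℕ} (h : List.Forall₂ (· ≤ ·) e a) :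
    ∃ b : List ℕ, b.length = e.length ∧ List.zipWith (· + ·) e b = a ∧ e.sum + b.sum = a.sum := by
  induction h with
  | nil => exact ⟨[], by simp⟩
  | @cons x y e a hxy _ ih =>
    obtain ⟨b, h₁, h₂, h₃⟩ := ih
    refine ⟨(y - x) :: b, by simp [h₁], by simp [h₂, hxy], ?_⟩
    simp only [List.sum_cons]
    omega

/-- The word that the stack transforms into `q` when `f i` pushes beyond the least possible number
precede the pop of the `i`-th letter. -/
def unsort (q : List ℕ) (f : ℕ → ℕ) : List ℕ :=
  (unsortAux (List.zip (List.zipWith (· + ·) (minPush q) ((List.range q.length).map f)) q)).2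

theorem exists_unsort_eq {p : List ℕ} (hp : p.Nodup) (hne : p ≠ []) :
    1 ≤ runCount (stackSort p) ∧ 2 * runCount (stackSort p) ≤ p.length + 1 ∧
    ∃ f ∈ Finset.finsuppAntidiag (Finset.range p.length)
        (p.length + 1 - 2 * runCount (stackSort p)), unsort (stackSort p) f = p := by
  obtain ⟨w, hw₁, hw₂, hw₃, hw₄⟩ := exists_stackWord hp
  obtain ⟨b, hb₁, hb₂, hb₃⟩ := exists_zipWith_add_of_forall₂_le hw₃
  have hlen := (stackSort_perm hp).length_eq
  have hne' : stackSort p ≠ [] := fun h => hne (by simpa [h] using hlen.symm)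
  have hsum := sum_minPush hne'
  rw [length_minPush] at hb₁
  have hmap : (List.range (stackSort p).length).map b.toFinsupp = b := by
    refine List.ext_getElem (by simp [hb₁]) fun i h₁ h₂ => ?_
    simp [List.toFinsupp_apply, h₂]
  have hfs : ∑ i ∈ Finset.range p.length, b.toFinsupp i = b.sum := by
    conv_rhs => rw [← hmap, hlen]
    rfl
  refine ⟨by omega, by omega, b.toFinsupp, ?_, ?_⟩
  · rw [Finset.mem_finsuppAntidiag]
    refine ⟨hfs.trans (by omega), ?_⟩
    · intro i hi
      rw [Finsupp.mem_support_iff, List.toFinsupp_apply] at hi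
      rw [Finset.mem_range]
      by_contra hcon
      exact hi (List.getD_eq_default _ _ (by omega))
  · rw [unsort, hmap, hb₂, ← hw₁, ← List.zip_of_prod (xs := w) rfl rfl]
    simpa [unsortAux] using congrArg Prod.snd (hw₄ [])

/-- Data describing a permutation `p` for which `stackSort p` avoids `231`: its length, its number of
descending run starts and the complementary number, (a superset of) the positions where
`stackSort p` splits as a direct sum, and the map recovering `p` from its sorted list of letters. -/
structure SortCode where
  size : ℕ
  runs : ℕ
  coruns : ℕ
  cuts : Finset ℕ
  decode : List ℕ → List ℕ

namespace SortCode

def empty : SortCode := ⟨0, 0, 0, {0}, fun _ => []⟩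

/-- The code of `L m R`, where `m` is the maximum and where, if `L` is nonempty, exactly `d` letters
of `R` are smaller than the maximum of `L`. -/
def node (l r : SortCode) (d : ℕ) : SortCode where
  size := l.size + r.size + 1
  runs := l.runs + r.runs + if l.size = 0 then 1 else 0
  coruns := l.coruns + r.coruns + if r.size = 0 then 1 else 0
  cuts := {e ∈ l.cuts | e < l.size} ∪ {e ∈ r.cuts | d ≤ e}.image (l.size + ·) ∪
    {l.size + r.size + 1}
  decode V :=
    l.decode (V.take (l.size - 1) ++ (V.drop (l.size - 1 + d)).take (min l.size 1)) ++
      V.getLastD 0 ::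
        r.decode ((V.drop (l.size - 1)).take d ++ (V.drop (l.size + d)).dropLast)

/-- The possible numbers of letters of `R` smaller than the maximum of `L`. -/
def positions (l r : SortCode) : Finset ℕ := if l.size = 0 then {0} else r.cuts

/-- The codes of size `n`. -/
def all : ℕ → Multiset SortCode
  | 0 => {empty}
  | n + 1 => (Finset.univ : Finset (Fin (n + 1))).val.bind fun i =>
      (all i).bind fun l => (all (n - i)).bind fun r => (positions l r).val.map (node l r)
decreasing_by all_goals omega

theorem mem_all_succ {n : ℕ} {c : SortCode} :
    c ∈ all (n + 1) ↔ ∃ i ≤ n, ∃ l ∈ all i, ∃ r ∈ all (n - i), ∃ d ∈ positions l r,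
      node l r d = c := by
  rw [all]
  simp only [Multiset.mem_bind, Multiset.mem_map, Finset.mem_val, Finset.mem_univ, true_and]
  constructor
  · rintro ⟨i, h⟩
    exact ⟨i, by omega, h⟩
  · rintro ⟨i, hi, h⟩
    exact ⟨⟨i, by omega⟩, h⟩

theorem size_of_mem {n : ℕ} {c : SortCode} (hc : c ∈ all n) : c.size = n := by
  induction n using Nat.strong_induction_on generalizing c with
  | _ n ih =>
    cases n with
    | zero =>
      rw [all, Multiset.mem_singleton] at hc
      subst hc
      rfl
    | succ n =>
      obtain ⟨i, hi, l, hl, r, hr, d, hd, rfl⟩ := mem_all_succ.1 hc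
      have := ih i (by omega) hl
      have := ih (n - i) (by omega) hr
      simp only [node]
      omega

theorem node_mem_all {l r : SortCode} {d : ℕ} (hl : l ∈ all l.size) (hr : r ∈ all r.size)
    (hd : d ∈ positions l r) : node l r d ∈ all (l.size + r.size + 1) :=
  mem_all_succ.2 ⟨l.size, by omega, l, hl, r, by rwa [Nat.add_sub_cancel_left], d, hd, rfl⟩

theorem cuts_spec {n : ℕ} {c : SortCode} (hc : c ∈ all n) :
    n ∈ c.cuts ∧ ∀ e ∈ c.cuts, e ≤ n := by
  induction n using Nat.strong_induction_on generalizing c with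
  | _ n ih =>
    cases n with
    | zero =>
      rw [all, Multiset.mem_singleton] at hc
      subst hc
      simp [empty]
    | succ n =>
      obtain ⟨i, hi, l, hl, r, hr, d, hd, rfl⟩ := mem_all_succ.1 hc
      have hls := size_of_mem hl
      have hrs := size_of_mem hr
      have hrc := (ih (n - i) (by omega) hr).2
      have hn : l.size + r.size + 1 = n + 1 := by omega
      simp only [node, Finset.mem_union, Finset.mem_filter, Finset.mem_image, Finset.mem_singleton,
        hn, or_true, true_and]
      rintro e ((⟨-, he⟩ | ⟨f, ⟨hf, -⟩, rfl⟩) | rfl)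
      · omega
      · have := hrc f hf
        omega
      · rfl

theorem card_cuts_pos {n : ℕ} {c : SortCode} (hc : c ∈ all n) : 1 ≤ c.cuts.card :=
  Finset.card_pos.2 ⟨n, (cuts_spec hc).1⟩

theorem runs_add_coruns {n : ℕ} {c : SortCode} (hc : c ∈ all (n + 1)) :
    c.runs + c.coruns = n + 2 := by
  induction n using Nat.strong_induction_on generalizing c with
  | _ n ih =>
    obtain ⟨i, hi, l, hl, r, hr, d, hd, rfl⟩ := mem_all_succ.1 hc
    have key : ∀ j, j ≤ n → ∀ c ∈ all j, c.runs + c.coruns + (if c.size = 0 then 1 else 0)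
        = j + 1 := by
      intro j hj c hc
      rw [size_of_mem hc]
      cases j with
      | zero =>
        rw [all, Multiset.mem_singleton] at hc
        subst hc
        rfl
      | succ j => simpa using ih j (by omega) hc
    have := key i hi l hl
    have := key (n - i) (by omega) r hr
    simp only [node]
    omega

theorem card_cuts_node {l r : SortCode} {d : ℕ} (hl : l ∈ all l.size) (hr : r ∈ all r.size) :
    (node l r d).cuts.card = l.cuts.card + {e ∈ r.cuts | d ≤ e}.card := by
  have h₁ : {e ∈ l.cuts | e < l.size}.card + 1 = l.cuts.card := by
    obtain ⟨h, h'⟩ := cuts_spec hl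
    rw [← Finset.card_erase_add_one h]
    congr 2
    ext e
    simp only [Finset.mem_filter, Finset.mem_erase]
    constructor
    · rintro ⟨h₁, h₂⟩
      exact ⟨by omega, h₁⟩
    · rintro ⟨h₁, h₂⟩
      exact ⟨h₂, by have := h' e h₂; omega⟩
  simp only [node]
  rw [Finset.card_union_of_disjoint, Finset.card_union_of_disjoint,
    Finset.card_image_of_injective _ (add_right_injective _), Finset.card_singleton]
  · omega
  · rw [Finset.disjoint_left]
    simp only [Finset.mem_filter, Finset.mem_image]
    rintro e ⟨-, he⟩ ⟨f, -, rfl⟩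
    omega
  · rw [Finset.disjoint_singleton_right]
    simp only [Finset.mem_union, Finset.mem_filter, Finset.mem_image]
    rintro (⟨-, he⟩ | ⟨f, ⟨hf, -⟩, he⟩)
    · omega
    · have := (cuts_spec hr).2 f hf
      omega

end SortCode

theorem eq_append_of_pairwise_not_between {ℓ : ℕ} {B : List ℕ} (hℓ : ℓ ∉ B)
    (h : B.Pairwise fun x y => ¬ (y < ℓ ∧ ℓ < x)) :
    ∃ B₁ B₂, B = B₁ ++ B₂ ∧ (∀ x ∈ B₁, x < ℓ) ∧ ∀ x ∈ B₂, ℓ < x := by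
  induction B with
  | nil => exact ⟨[], [], by simp⟩
  | cons x B ih =>
    rw [List.pairwise_cons] at h
    simp only [List.mem_cons, not_or] at hℓ
    obtain ⟨B₁, B₂, rfl, h₁, h₂⟩ := ih hℓ.2 h.2
    rcases lt_or_gt_of_ne hℓ.1 with hx | hx
    · refine ⟨[], x :: (B₁ ++ B₂), rfl, by simp, ?_⟩
      have : B₁ = [] := by
        rw [List.eq_nil_iff_forall_not_mem]
        intro y hy
        exact h.1 y (by simp [hy]) ⟨h₁ y hy, hx⟩
      subst this
      simpa [hx] using h₂
    · exact ⟨x :: B₁, B₂, rfl, by simpa [hx] using h₁, h₂⟩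

theorem exists_stackSort_eq_concat {L : List ℕ} (hL : L.Nodup) (hne : L ≠ []) :
    ∃ A ℓ, stackSort L = A ++ [ℓ] ∧ ∀ x ∈ A, x < ℓ := by
  revert hne
  refine List.Nodup.max_induction
    (P := fun L => L ≠ [] → ∃ A ℓ, stackSort L = A ++ [ℓ] ∧ ∀ x ∈ A, x < ℓ) ?_ ?_ L hL
  · exact fun h => absurd rfl h
  · intro L m R hL hR hLn hRn _ _ _
    refine ⟨_, m, stackSort_append_cons hL hR, fun x hx => ?_⟩
    rcases List.mem_append.1 hx with hx | hx
    · exact hL x ((stackSort_perm hLn).mem_iff.1 hx)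
    · exact hR x ((stackSort_perm hRn).mem_iff.1 hx)

theorem pairwise_mergeSort_lt {A : List ℕ} (hA : A.Nodup) :
    (A.mergeSort (· ≤ ·)).Pairwise (· < ·) := by
  have h := A.pairwise_mergeSort (le := (· ≤ ·)) (by simpa using fun a b c => le_trans)
    (by simpa using le_total)
  have h' : (A.mergeSort (· ≤ ·)).Nodup := (List.mergeSort_perm A _).nodup_iff.2 hA
  refine (h.and h').imp fun {a b} hab => ?_
  simp only [decide_eq_true_eq] at hab
  omega

theorem List.Perm.eq_of_pairwise_lt {V W : List ℕ} (h : V.Perm W) (hV : V.Pairwise (· < ·))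
    (hW : W.Pairwise (· < ·)) : V = W :=
  h.eq_of_pairwise (fun _ _ _ _ hab hba => absurd hab (by omega)) hV hW

namespace SortCode

theorem decode_node {l r : SortCode} {d m : ℕ} {X Y K Z L R : List ℕ}
    (hX : X.length = l.size - 1) (hY : Y.length = d) (hK : K.length = min l.size 1)
    (hL : l.decode (X ++ K) = L) (hR : r.decode (Y ++ Z) = R) :
    (node l r d).decode (X ++ (Y ++ (K ++ (Z ++ [m])))) = L ++ m :: R := by
  have h₁ : (X ++ (Y ++ (K ++ (Z ++ [m])))).take (l.size - 1) = X := by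
    rw [← hX, List.take_left]
  have h₂ : (X ++ (Y ++ (K ++ (Z ++ [m])))).drop (l.size - 1) = Y ++ (K ++ (Z ++ [m])) := by
    rw [← hX, List.drop_left]
  have h₃ : (X ++ (Y ++ (K ++ (Z ++ [m])))).drop (l.size - 1 + d) = K ++ (Z ++ [m]) := by
    rw [← List.drop_drop, h₂, ← hY, List.drop_left]
  have h₄ : (X ++ (Y ++ (K ++ (Z ++ [m])))).drop (l.size + d) = Z ++ [m] := by
    rw [show l.size + d = l.size - 1 + d + min l.size 1 by omega, ← List.drop_drop, h₃, ← hK,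
      List.drop_left]
  have h₅ : (X ++ (Y ++ (K ++ (Z ++ [m])))).getLastD 0 = m := by
    simp only [← List.append_assoc, List.getLastD_concat]
  simp only [node]
  rw [h₁, h₂, h₃, h₄, h₅, ← hK, List.take_left, ← hY, List.take_left, List.dropLast_concat, hL, hR]

theorem exists_position {L R : List ℕ} {m : ℕ} {l r : SortCode} (hL : ∀ x ∈ L, x < m)
    (hR : ∀ x ∈ R, x < m) (hLn : L.Nodup) (hRn : R.Nodup) (hLR : ∀ x ∈ L, x ∉ R)
    (hav : Avoids231 (stackSort L ++ stackSort R ++ [m])) (hl : l.size = L.length)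
    (hr : ∀ w₁ w₂, stackSort R = w₁ ++ w₂ → (∀ x ∈ w₁, ∀ y ∈ w₂, x < y) → w₁.length ∈ r.cuts) :
    ∃ d ∈ positions l r,
      (∀ w₁ w₂, stackSort R = w₁ ++ w₂ → (∀ x ∈ stackSort L, ∀ y ∈ w₂, x < y) → d ≤ w₁.length) ∧
      ∃ X Y K Z : List ℕ, X.length = l.size - 1 ∧ Y.length = d ∧ K.length = min l.size 1 ∧
        (X ++ K).Pairwise (· < ·) ∧ (X ++ K).Perm L ∧ (Y ++ Z).Pairwise (· < ·) ∧
        (Y ++ Z).Perm R ∧ (X ++ (Y ++ (K ++ (Z ++ [m])))).Pairwise (· < ·) := by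
  have hRp := stackSort_perm hRn
  have hRn' := hRp.nodup_iff.2 hRn
  rcases eq_or_ne L [] with rfl | hne
  · have hs := pairwise_mergeSort_lt hRn
    have hsp := List.mergeSort_perm R (· ≤ ·)
    refine ⟨0, by simp [positions, hl], by simp, [], [], [], R.mergeSort (· ≤ ·), by simp [hl],
      rfl, by simp [hl], by simp, by simp, hs, hsp, ?_⟩
    simp only [List.nil_append]
    rw [List.pairwise_append]
    refine ⟨hs, by simp, fun x hx y hy => ?_⟩
    rw [List.mem_singleton.1 hy]
    exact hR x (hsp.mem_iff.1 hx)
  · obtain ⟨A, ℓ, hA, hAℓ⟩ := exists_stackSort_eq_concat hLn hne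
    have hLp := stackSort_perm hLn
    have hAn := hLp.nodup_iff.2 hLn
    rw [hA] at hLp hAn hav
    have hlen : l.size = A.length + 1 := by rw [hl, ← hLp.length_eq]; simp
    have hmemA : ∀ x ∈ A, x ∈ L := fun x hx => hLp.mem_iff.1 (by simp [hx])
    have hℓL : ℓ ∈ L := hLp.mem_iff.1 (by simp)
    have hAR : ∀ x ∈ A, ∀ y ∈ stackSort R, x < y := by
      intro x hx y hy
      by_contra hcon
      have hyR := hRp.mem_iff.1 hy
      have hxy : x ≠ y := fun h => hLR x (hmemA x hx) (h ▸ hyR)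
      refine hav x ℓ y ?_ (by omega) (hAℓ x hx)
      rw [List.append_assoc, List.append_assoc]
      exact (List.singleton_sublist.2 hx).append (List.Sublist.append (List.Sublist.refl [ℓ])
        ((List.singleton_sublist.2 hy).trans (List.sublist_append_left _ _)))
    have hbet : (stackSort R).Pairwise fun x y => ¬ (y < ℓ ∧ ℓ < x) := by
      rw [List.pairwise_iff_forall_sublist]
      rintro x y hxy ⟨h₁, h₂⟩
      refine hav ℓ x y ?_ h₁ h₂
      refine List.Sublist.trans ?_ (List.sublist_append_left _ _)
      exact List.Sublist.append (List.sublist_append_right A [ℓ]) hxy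
    obtain ⟨B₁, B₂, hB, hB₁, hB₂⟩ := eq_append_of_pairwise_not_between
      (fun h => hLR ℓ hℓL (hRp.mem_iff.1 h)) hbet
    rw [hB] at hRp hRn' hAR
    obtain ⟨hB₁n, hB₂n, -⟩ := List.nodup_append.1 hRn'
    have hAs := pairwise_mergeSort_lt (List.nodup_append.1 hAn).1
    have hAp := List.mergeSort_perm A (· ≤ ·)
    have hB₁s := pairwise_mergeSort_lt hB₁n
    have hB₁p := List.mergeSort_perm B₁ (· ≤ ·)
    have hB₂s := pairwise_mergeSort_lt hB₂n
    have hB₂p := List.mergeSort_perm B₂ (· ≤ ·)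
    have hR' : ∀ x ∈ B₁ ++ B₂, x < m := fun x hx => hR x (hRp.mem_iff.1 hx)
    have hℓm := hL ℓ hℓL
    have hAm : ∀ x ∈ A, x < m := fun x hx => hL x (hmemA x hx)
    refine ⟨B₁.length, ?_, ?_, A.mergeSort (· ≤ ·), B₁.mergeSort (· ≤ ·), [ℓ],
      B₂.mergeSort (· ≤ ·), ?_, hB₁p.length_eq, ?_, ?_, ?_, ?_, ?_, ?_⟩
    · rw [positions, if_neg (by omega)]
      exact hr B₁ B₂ hB fun x hx y hy => (hB₁ x hx).trans (hB₂ y hy)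
    · intro w₁ w₂ hw hlt
      by_contra hcon
      rw [hB] at hw
      rcases List.append_eq_append_iff.1 hw with ⟨t, ht₁, ht₂⟩ | ⟨t, ht₁, ht₂⟩
      · exact hcon (by simp [ht₁])
      · cases t with
        | nil => exact hcon (by simp [ht₁])
        | cons x t =>
          have h₁ := hB₁ x (by simp [ht₁])
          have h₂ := hlt ℓ (by simp [hA]) x (by simp [ht₂])
          omega
    · rw [hAp.length_eq]
      omega
    · simp [hlen]
    · rw [List.pairwise_append]
      refine ⟨hAs, by simp, fun x hx y hy => ?_⟩
      rw [List.mem_singleton.1 hy]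
      exact hAℓ x (hAp.mem_iff.1 hx)
    · exact (hAp.append_right _).trans hLp
    · rw [List.pairwise_append]
      exact ⟨hB₁s, hB₂s, fun x hx y hy =>
        (hB₁ x (hB₁p.mem_iff.1 hx)).trans (hB₂ y (hB₂p.mem_iff.1 hy))⟩
    · exact (hB₁p.append hB₂p).trans hRp
    · simp only [List.pairwise_append, List.mem_append, List.mem_singleton, hAp.mem_iff,
        hB₁p.mem_iff, hB₂p.mem_iff, hAs, hB₁s, hB₂s, true_and, List.pairwise_singleton]
      simp only [List.mem_append] at hAR hR'
      refine ⟨⟨⟨?_, ?_⟩, ?_⟩, ?_⟩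
      · rintro a ha b rfl
        exact hR' a (Or.inr ha)
      · rintro a rfl b (hb | rfl)
        exacts [hB₂ b hb, hℓm]
      · rintro a ha b (rfl | hb | rfl)
        exacts [hB₁ a ha, (hB₁ a ha).trans (hB₂ b hb), hR' a (Or.inl ha)]
      · rintro a ha b (hb | rfl | hb | rfl)
        exacts [hAR a ha b (Or.inl hb), hAℓ a ha, hAR a ha b (Or.inr hb), hAm a ha]

theorem exists_code {p : List ℕ} (hp : p.Nodup) (hav : Avoids231 (stackSort p)) :
    ∃ c : SortCode, c.size = p.length ∧ c ∈ all c.size ∧ c.runs = runCount p ∧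
      (∀ w₁ w₂, stackSort p = w₁ ++ w₂ → (∀ x ∈ w₁, ∀ y ∈ w₂, x < y) → w₁.length ∈ c.cuts) ∧
      ∀ V : List ℕ, V.Pairwise (· < ·) → V.Perm p → c.decode V = p := by
  revert hav
  refine List.Nodup.max_induction (P := fun p => p.Nodup → Avoids231 (stackSort p) →
    ∃ c : SortCode, c.size = p.length ∧ c ∈ all c.size ∧ c.runs = runCount p ∧
      (∀ w₁ w₂, stackSort p = w₁ ++ w₂ → (∀ x ∈ w₁, ∀ y ∈ w₂, x < y) → w₁.length ∈ c.cuts) ∧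
      ∀ V : List ℕ, V.Pairwise (· < ·) → V.Perm p → c.decode V = p) ?_ ?_ p hp hp
  · intro _ _
    refine ⟨empty, rfl, by simp [all, empty], rfl, fun w₁ w₂ h _ => ?_, fun V _ _ => rfl⟩
    have h' : [] = w₁ ++ w₂ := h
    simp [empty, (List.nil_eq_append_iff.1 h').1]
  · intro L m R hL hR hLn hRn ihL ihR hp hav
    rw [stackSort_append_cons hL hR] at hav
    have hLR : ∀ x ∈ L, x ∉ R := fun x hx hx' =>
      (List.nodup_append.1 hp).2.2 x hx x (by simp [hx']) rfl
    obtain ⟨l, hl, hlm, hlr, hlc, hld⟩ := ihL hLn (hav.sublist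
      ((List.sublist_append_left _ _).trans (List.sublist_append_left _ _)))
    obtain ⟨r, hr, hrm, hrr, hrc, hrd⟩ := ihR hRn (hav.sublist
      ((List.sublist_append_right _ _).trans (List.sublist_append_left _ _)))
    obtain ⟨d, hd, hdw, X, Y, K, Z, hX, hY, hK, hXK, hXKp, hYZ, hYZp, hV⟩ :=
      exists_position hL hR hLn hRn hLR hav hl hrc
    refine ⟨node l r d, ?_, node_mem_all hlm hrm hd, ?_, ?_, ?_⟩
    · simp only [node, List.length_append, List.length_cons]
      omega
    · rw [runCount_append_cons hL hR, ← hlr, ← hrr]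
      simp only [node, hl, List.length_eq_zero_iff]
    · intro w₁ w₂ hw hlt
      rw [stackSort_append_cons hL hR] at hw
      have hLlen := (stackSort_perm hLn).length_eq
      have hRlen := (stackSort_perm hRn).length_eq
      simp only [node, Finset.mem_union, Finset.mem_filter, Finset.mem_image,
        Finset.mem_singleton]
      rcases List.eq_nil_or_concat' w₂ with rfl | ⟨v, y, rfl⟩
      · right
        have := congrArg List.length hw
        simp only [List.length_append, List.length_cons, List.length_nil] at this
        omega
      · left
        rw [← List.append_assoc] at hw
        have hw' := (List.append_inj' hw rfl).1
        have hlt' : ∀ x ∈ w₁, ∀ z ∈ v, x < z := fun x hx z hz => hlt x hx z (by simp [hz])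
        rcases List.append_eq_append_iff.1 hw' with ⟨t, ht₁, ht₂⟩ | ⟨t, ht₁, ht₂⟩
        · right
          refine ⟨t.length, ⟨hrc t v ht₂ fun x hx => hlt' x (by simp [ht₁, hx]), ?_⟩, ?_⟩
          · exact hdw t v ht₂ fun x hx => hlt' x (by simp [ht₁, hx])
          · rw [ht₁, List.length_append]
            omega
        · cases t with
          | nil =>
            right
            refine ⟨0, ⟨hrc [] _ rfl (by simp), ?_⟩, ?_⟩
            · refine hdw [] _ rfl fun x hx z hz => hlt' x ?_ z ?_
              · rw [List.append_nil] at ht₁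
                rwa [← ht₁]
              · rw [List.nil_append] at ht₂
                rwa [ht₂]
            · rw [ht₁, List.append_nil] at hLlen
              omega
          | cons z t =>
            left
            refine ⟨hlc w₁ (z :: t) ht₁ fun x hx u hu => hlt' x hx u ?_, ?_⟩
            · rw [ht₂]
              exact List.mem_append_left _ hu
            · rw [ht₁, List.length_append, List.length_cons] at hLlen
              omega
    · intro V hVs hVp
      have : V = X ++ (Y ++ (K ++ (Z ++ [m]))) := by
        refine List.Perm.eq_of_pairwise_lt (hVp.trans ?_) hVs hV
        refine ((hXKp.symm.append_right _).trans ?_)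
        rw [List.append_assoc]
        refine List.Perm.append_left X ?_
        have h₁ : (K ++ m :: R).Perm (K ++ (Y ++ (Z ++ [m]))) := by
          refine List.Perm.append_left K ?_
          rw [← List.append_assoc]
          exact (hYZp.symm.cons m).trans (List.perm_append_singleton m _).symm
        refine h₁.trans ?_
        rw [← List.append_assoc, ← List.append_assoc Y]
        exact List.perm_append_comm.append_right _
      rw [this]
      exact decode_node hX hY hK (hld _ hXK hXKp) (hrd _ hYZ hYZp)

end SortCode

namespace SortCode

theorem ncard_le_card_all (n : ℕ) (hn : 1 ≤ n) :
    {p : List ℕ | p.Perm (List.range' 1 n) ∧ stackSort^[3] p = List.range' 1 n}.ncard ≤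
      ∑ k ∈ Finset.Icc 1 ((n + 1) / 2),
        ((all n).filter (fun c => c.runs = k)).card * (2 * n - 2 * k).choose (n - 1) := by
  classical
  set V := List.range' 1 n
  set S : Finset (List ℕ) := (Finset.Icc 1 ((n + 1) / 2)).biUnion fun k =>
    ((all n).filter (fun c => c.runs = k)).toFinset.biUnion fun c =>
      (Finset.finsuppAntidiag (Finset.range n) (n + 1 - 2 * k)).image fun f : ℕ →₀ ℕ =>
        unsort (c.decode V) f
  have hsub : {p : List ℕ | p.Perm V ∧ stackSort^[3] p = V} ⊆ S := by
    rintro p ⟨hpV, hp3⟩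
    have hVn : V.Nodup := List.nodup_range'
    have hpn : p.Nodup := hpV.nodup_iff.2 hVn
    have hlen : p.length = n := by rw [hpV.length_eq, List.length_range']
    have hqp := stackSort_perm hpn
    have hqn := hqp.nodup_iff.2 hpn
    have hqn' := (stackSort_perm hqn).nodup_iff.2 hqn
    have hav : Avoids231 (stackSort (stackSort p)) := by
      refine avoids231_of_stackSort_sorted hqn' ?_
      rw [show stackSort (stackSort (stackSort p)) = V from hp3]
      exact List.pairwise_lt_range'
    obtain ⟨c, hc, hcm, hcr, -, hcd⟩ := exists_code hqn hav
    obtain ⟨h₁, h₂, f, hf, hpf⟩ := exists_unsort_eq hpn (by rintro rfl; simp at hlen; omega)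
    rw [hc, hqp.length_eq, hlen] at hcm
    rw [hlen] at h₂ hf
    simp only [S, Finset.coe_biUnion, Set.mem_iUnion, Finset.mem_coe, Finset.mem_image,
      Multiset.mem_toFinset, Multiset.mem_filter]
    refine ⟨c.runs, Finset.mem_Icc.2 (by omega), c, ⟨hcm, rfl⟩, f, by rwa [hcr], ?_⟩
    rw [hcd V List.pairwise_lt_range' (hpV.symm.trans hqp.symm), hpf]
  calc _ ≤ (S : Set (List ℕ)).ncard := Set.ncard_le_ncard hsub S.finite_toSet
    _ = S.card := Set.ncard_coe_finset S
    _ ≤ _ := by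
      refine Finset.card_biUnion_le.trans (Finset.sum_le_sum fun k hk => ?_)
      rw [Finset.mem_Icc] at hk
      refine (Finset.card_biUnion_le_card_mul _ _ ((2 * n - 2 * k).choose (n - 1))
        fun c _ => ?_).trans (Nat.mul_le_mul_right _ (Multiset.toFinset_card_le _))
      refine Finset.card_image_le.trans ?_
      rw [Finset.card_finsuppAntidiag_nat_eq_choose, Finset.card_range,
        ← Nat.choose_symm (by omega)]
      refine le_of_eq ?_
      congr 1 <;> omega

end SortCode

theorem Finset.sum_card_filter_le {M : Type*} [AddCommMonoid M] (s : Finset ℕ) (g : ℕ → M) :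
    ∑ d ∈ s, g {e ∈ s | d ≤ e}.card = ∑ i ∈ Finset.range s.card, g (i + 1) := by
  induction s using Finset.induction_on_min with
  | empty => simp
  | insert a s ha ih =>
    have has : a ∉ s := fun h => lt_irrefl a (ha a h)
    rw [Finset.sum_insert has, Finset.card_insert_of_notMem has, Finset.sum_range_succ, ← ih,
      add_comm]
    congr 1
    · refine Finset.sum_congr rfl fun d hd => ?_
      rw [Finset.filter_insert, if_neg (not_le.2 (ha d hd))]
    · rw [Finset.filter_true_of_mem, Finset.card_insert_of_notMem has]
      intro e he
      rcases Finset.mem_insert.1 he with rfl | he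
      exacts [le_rfl, (ha e he).le]

namespace SortCode

variable {B : Type*} [CommRing B]

/-- The weight of a code, with `u` marking the cuts and `y`, `z` marking the (co)runs. -/
def weight (y z u : B) (c : SortCode) : B := u ^ (c.cuts.card - 1) * y ^ c.runs * z ^ c.coruns

/-- The total weight of the codes of size `n`. -/
def totalWeight (y z u : B) (n : ℕ) : B := ((all n).map (weight y z u)).sum

/-- The total weight of the codes `node l r d` with `l` of size `i` and `r` of size `j`. -/
def nodeWeight (y z u : B) (i j : ℕ) : B :=
  ((all i).map fun l => ((all j).map fun r =>
    ∑ d ∈ positions l r, weight y z u (node l r d)).sum).sum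

theorem totalWeight_succ (y z u : B) (n : ℕ) :
    totalWeight y z u (n + 1) = ∑ ij ∈ antidiagonal n, nodeWeight y z u ij.1 ij.2 := by
  rw [Finset.Nat.sum_antidiagonal_eq_sum_range_succ (nodeWeight y z u), totalWeight, all,
    Multiset.map_bind, Multiset.sum_bind]
  simp only [Multiset.map_bind, Multiset.sum_bind, Multiset.map_map]
  exact Fin.sum_univ_eq_sum_range (fun i => nodeWeight y z u i (n - i)) (n + 1)

theorem totalWeight_zero (y z u : B) : totalWeight y z u 0 = 1 := by
  simp [totalWeight, all, weight, empty]

theorem weight_node {y z u : B} {l r : SortCode} {d : ℕ} (hl : l ∈ all l.size)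
    (hr : r ∈ all r.size) : weight y z u (node l r d) =
      weight y z u l * (if l.size = 0 then y else 1) *
        (u ^ {e ∈ r.cuts | d ≤ e}.card * y ^ r.runs * z ^ r.coruns) *
          (if r.size = 0 then z else 1) := by
  have := card_cuts_pos hl
  rw [weight, card_cuts_node hl hr, Nat.sub_add_comm this, weight]
  simp only [node]
  split_ifs <;> ring

theorem nodeWeight_zero (y z u : B) (j : ℕ) :
    nodeWeight y z u 0 j = if j = 0 then u * y * z else u * y * totalWeight y z u j := by
  have key : nodeWeight y z u 0 j = u * y * totalWeight y z u j * (if j = 0 then z else 1) := by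
    rw [nodeWeight, totalWeight, all, Multiset.map_singleton, Multiset.sum_singleton,
      ← Multiset.sum_map_mul_left, ← Multiset.sum_map_mul_right]
    refine congrArg _ (Multiset.map_congr rfl fun r hr => ?_)
    have hs := size_of_mem hr
    have hpos := card_cuts_pos hr
    have he : empty.size = 0 := rfl
    rw [positions, if_pos he, Finset.sum_singleton, weight_node (by simp [empty, all]) (by rwa [hs]),
      hs, if_pos he, Finset.filter_true_of_mem fun e _ => Nat.zero_le e,
      ← Nat.sub_add_cancel hpos, weight, weight]
    simp [empty]
    split_ifs <;> ring
  rw [key]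
  split_ifs with h
  · rw [h, totalWeight_zero, mul_one]
  · rw [mul_one]

theorem nodeWeight_succ (y z u : B) (i j : ℕ) :
    (u - 1) * nodeWeight y z u (i + 1) j = u * totalWeight y z u (i + 1) *
      (if j = 0 then (u - 1) * z else u * totalWeight y z u j - totalWeight y z 1 j) := by
  have key : (u - 1) * nodeWeight y z u (i + 1) j = u * totalWeight y z u (i + 1) *
      ((u * totalWeight y z u j - totalWeight y z 1 j) * (if j = 0 then z else 1)) := by
    rw [nodeWeight, totalWeight, totalWeight, totalWeight, ← Multiset.sum_map_mul_left,
      ← Multiset.sum_map_mul_left, ← Multiset.sum_map_mul_left, ← Multiset.sum_map_sub,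
      ← Multiset.sum_map_mul_right, ← Multiset.sum_map_mul_right]
    refine congrArg _ (Multiset.map_congr rfl fun l hl => ?_)
    rw [← Multiset.sum_map_mul_left, ← Multiset.sum_map_mul_left]
    refine congrArg _ (Multiset.map_congr rfl fun r hr => ?_)
    have hls := size_of_mem hl
    have hrs := size_of_mem hr
    have hpos := card_cuts_pos hr
    rw [positions, if_neg (by omega), Finset.sum_congr rfl fun d _ =>
      weight_node (by rwa [hls]) (by rwa [hrs]), ← Finset.sum_mul, ← Finset.mul_sum]
    simp only [mul_assoc, ← Finset.sum_mul]
    rw [Finset.sum_card_filter_le r.cuts (fun k => u ^ k), hrs]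
    simp only [pow_succ, ← Finset.sum_mul]
    have hg := mul_geom_sum u r.cuts.card
    obtain ⟨k, hk⟩ := Nat.exists_eq_add_of_le' hpos
    rw [hk] at hg ⊢
    simp only [weight, hk, Nat.add_sub_cancel, hls, if_neg (Nat.succ_ne_zero i), one_pow]
    linear_combination (u ^ (l.cuts.card - 1) * y ^ l.runs * z ^ l.coruns * u * y ^ r.runs
      * z ^ r.coruns * (if j = 0 then z else 1)) * hg
  rw [key]
  split_ifs with h
  · rw [h, totalWeight_zero, totalWeight_zero, mul_one]
  · rw [mul_one]

end SortCode

namespace PowerSeries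

variable {A : Type*} [CommRing A]

/-- The ring homomorphism `A⟦t⟧⟦s⟧ → A⟦t⟧` sending `s` to `t`. -/
noncomputable def diagHom : A⟦X⟧⟦X⟧ →+* A⟦X⟧ where
  toFun F := mk fun m => ∑ ij ∈ HasAntidiagonal.antidiagonal m, coeff ij.1 (coeff ij.2 F)
  map_one' := by
    ext m
    rw [coeff_mk, Finset.sum_eq_single (m, 0)]
    · simp
    · rintro ⟨i, j⟩ h hij
      have : j ≠ 0 := by
        rintro rfl
        simp_all
      simp [coeff_one, this]
    · simp
  map_zero' := by
    ext m
    simp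
  map_add' F G := by
    ext m
    simp [Finset.sum_add_distrib]
  map_mul' F G := by
    ext m
    simp only [coeff_mk, coeff_mul, map_sum, Finset.sum_mul_sum]
    simp only [Finset.sum_sigma']
    refine Finset.sum_nbij'
      (fun x => ⟨(x.2.2.1 + x.2.1.1, x.2.2.2 + x.2.1.2), (x.2.2.1, x.2.1.1), (x.2.2.2, x.2.1.2)⟩)
      (fun x => ⟨(x.2.1.1 + x.2.2.1, x.2.1.2 + x.2.2.2), (x.2.1.2, x.2.2.2), (x.2.1.1, x.2.2.1)⟩)
      ?_ ?_ ?_ ?_ ?_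
    · rintro ⟨⟨i, j⟩, ⟨a, b⟩, ⟨c, d⟩⟩ h
      simp only [mem_sigma, HasAntidiagonal.mem_antidiagonal, and_true] at h ⊢
      omega
    · rintro ⟨⟨i, j⟩, ⟨a, b⟩, ⟨c, d⟩⟩ h
      simp only [mem_sigma, HasAntidiagonal.mem_antidiagonal, and_true] at h ⊢
      omega
    · rintro ⟨⟨i, j⟩, ⟨a, b⟩, ⟨c, d⟩⟩ h
      simp only [mem_sigma, HasAntidiagonal.mem_antidiagonal] at h
      obtain ⟨-, rfl, rfl⟩ := h
      rfl
    · rintro ⟨⟨i, j⟩, ⟨a, b⟩, ⟨c, d⟩⟩ h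
      simp only [mem_sigma, HasAntidiagonal.mem_antidiagonal] at h
      obtain ⟨-, rfl, rfl⟩ := h
      rfl
    · rintro ⟨⟨i, j⟩, ⟨a, b⟩, ⟨c, d⟩⟩ h
      rfl

theorem coeff_diagHom (m : ℕ) (F : A⟦X⟧⟦X⟧) :
    coeff m (diagHom F) = ∑ ij ∈ HasAntidiagonal.antidiagonal m, coeff ij.1 (coeff ij.2 F) := by
  simp [diagHom]

@[simp]
theorem diagHom_X : diagHom (X : A⟦X⟧⟦X⟧) = X := by
  ext m
  rw [coeff_diagHom]
  rcases m with _ | m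
  · simp
  rw [Finset.sum_eq_single (m, 1)]
  · simp [coeff_X]
  · rintro ⟨i, j⟩ h hij
    have : j ≠ 1 := by
      rintro rfl
      simp_all
    simp [coeff_X, this]
  · simp

@[simp]
theorem diagHom_C (f : A⟦X⟧) : diagHom (C f) = f := by
  ext m
  rw [coeff_diagHom, Finset.sum_eq_single (m, 0)]
  · simp
  · rintro ⟨i, j⟩ h hij
    have : j ≠ 0 := by
      rintro rfl
      simp_all
    simp [coeff_C, this]
  · simp

theorem constantCoeff_diagHom (F : A⟦X⟧⟦X⟧) :
    constantCoeff (diagHom F) = constantCoeff (constantCoeff F) := by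
  rw [← coeff_zero_eq_constantCoeff_apply, coeff_diagHom]
  simp

theorem diagHom_map_map {A' : Type*} [CommRing A'] (f : A →+* A') (F : A⟦X⟧⟦X⟧) :
    diagHom (map (map f) F) = map f (diagHom F) := by
  ext m
  simp [coeff_diagHom]

end PowerSeries

namespace SortCode

open PowerSeries

section

variable {B : Type*} [CommRing B]

/-- The generating function of the codes of positive size, where `X ^ n` marks the size `n + 1`. -/
noncomputable def sizeGF (y z u : B) : B⟦X⟧ := PowerSeries.mk fun n => totalWeight y z u (n + 1)

theorem coeff_X_mul_sizeGF (y z u : B) (n : ℕ) :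
    coeff n (X * sizeGF y z u) = if n = 0 then 0 else totalWeight y z u n := by
  cases n <;> simp [sizeGF, coeff_succ_X_mul]

theorem sizeGF_eq (y z u : B) :
    C (u - 1) * sizeGF y z u = C ((u - 1) * u * y * z) +
      C (u * (u - 1) * (y + z)) * (X * sizeGF y z u) +
      C u * (X * sizeGF y z u) * (C u * (X * sizeGF y z u) - X * sizeGF y z 1) := by
  have hr : C ((u - 1) * u * y * z) + C (u * (u - 1) * (y + z)) * (X * sizeGF y z u) +
      C u * (X * sizeGF y z u) * (C u * (X * sizeGF y z u) - X * sizeGF y z 1) =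
      1 * (C ((u - 1) * u * y * z) + C (u * (u - 1) * y) * (X * sizeGF y z u)) +
      (X * sizeGF y z u) * (C (u * (u - 1) * z) +
        C u * (C u * (X * sizeGF y z u) - X * sizeGF y z 1)) := by
    simp only [map_mul, map_add]
    ring
  rw [hr]
  ext n
  rw [map_add, coeff_C_mul, coeff_mul, coeff_mul, ← Finset.sum_add_distrib, sizeGF, coeff_mk,
    totalWeight_succ, Finset.mul_sum]
  refine Finset.sum_congr rfl ?_
  rintro ⟨i, j⟩ -
  rw [← sizeGF]
  simp only [map_add, map_sub, coeff_C_mul, coeff_X_mul_sizeGF, coeff_one, coeff_C]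
  rcases i with _ | i
  · rw [nodeWeight_zero]
    rcases j with _ | j
    · simp
      ring
    · simp
      ring
  · rw [nodeWeight_succ]
    rcases j with _ | j
    · simp
      ring
    · simp
      ring

end

variable {A : Type*} [CommRing A]

/-- The generating function of codes where `t` marks the size plus one. -/
noncomputable def gf (y z u : A⟦X⟧) : A⟦X⟧ := diagHom (sizeGF y z u)

theorem gf_eq (y z u : A⟦X⟧) :
    (u - 1) * gf y z u = (u - 1) * u * y * z + u * (u - 1) * (y + z) * (X * gf y z u) +
      u * (X * gf y z u) * (u * (X * gf y z u) - X * gf y z 1) := by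
  have := congrArg diagHom (sizeGF_eq y z u)
  simp only [map_mul, map_add, map_sub (diagHom), diagHom_C, diagHom_X] at this
  exact this

theorem constantCoeff_gf (y z u : A⟦X⟧) :
    constantCoeff (gf y z u) = constantCoeff (u * y * z) := by
  have : constantCoeff (sizeGF y z u) = u * y * z := by
    rw [← coeff_zero_eq_constantCoeff_apply, sizeGF, coeff_mk, totalWeight_succ]
    simp [nodeWeight_zero]
  rw [gf, constantCoeff_diagHom, this]

theorem map_gf {A' : Type*} [CommRing A'] (f : A →+* A') (y z u : A⟦X⟧) :
    map f (gf y z u) = gf (map f y) (map f z) (map f u) := by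
  rw [gf, gf, ← diagHom_map_map]
  congr 1
  ext1 n
  simp only [sizeGF, coeff_map, coeff_mk, totalWeight, map_multiset_sum, Multiset.map_map]
  exact congrArg _ (Multiset.map_congr rfl fun c _ => by simp [weight])

end SortCode

namespace SortCode

open PowerSeries

variable {K : Type*} [CommRing K]

theorem gf_eq_and_deriv (y z u : K⟦X⟧) : ∃ g', let g := gf y z u; let m := gf y z 1
    (u - 1) * g = (u - 1) * u * y * z + u * (u - 1) * (y + z) * (X * g) +
      u * (X * g) * (u * (X * g) - X * m) ∧
    g + (u - 1) * g' = (2 * u - 1) * y * z + (2 * u - 1) * (y + z) * (X * g) +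
      u * (u - 1) * (y + z) * (X * g') + X * g * (u * (X * g) - X * m) +
      u * (X * g') * (u * (X * g) - X * m) + u * (X * g) * (X * g + u * (X * g')) := by
  set ι : K⟦X⟧ →+* (DualNumber K)⟦X⟧ := map (TrivSqZeroExt.inlHom K K) with hι
  set ε : (DualNumber K)⟦X⟧ := C DualNumber.eps with hε
  have hε2 : ε * ε = 0 := by rw [hε, ← map_mul, DualNumber.eps_mul_eps, map_zero]
  have hιX : ι X = X := map_X _
  have hfst : ∀ w n, (coeff n (ι w)).fst = coeff n w := fun w n => by
    simp [hι]
  have hsnd : ∀ w n, (coeff n (ι w)).snd = 0 := fun w n => by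
    simp [hι]
  have hεfst : ∀ w n, (coeff n (ε * w)).fst = 0 := fun w n => by
    simp [hε, coeff_C_mul]
  have hεsnd : ∀ w n, (coeff n (ε * w)).snd = (coeff n w).fst := fun w n => by
    simp [hε, coeff_C_mul]
  have hext : ∀ a b c d : K⟦X⟧, ι a + ε * ι b = ι c + ε * ι d → a = c ∧ b = d := by
    intro a b c d h
    constructor
    · ext n
      have := congrArg (fun w => (coeff n w).fst) h
      simpa [hfst, hεfst] using this
    · ext n
      have := congrArg (fun w => (coeff n w).snd) h
      simpa [hsnd, hεsnd, hfst] using this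
  have hdec : ∀ w : (DualNumber K)⟦X⟧, ∃ a b, w = ι a + ε * ι b := fun w =>
    ⟨PowerSeries.mk fun n => (coeff n w).fst, PowerSeries.mk fun n => (coeff n w).snd, by
      ext n
      · simp [hfst, hεfst]
      · simp [hsnd, hεsnd, hfst]⟩
  have h1 : gf (ι y) (ι z) 1 = ι (gf y z 1) := by rw [hι, map_gf, map_one]
  obtain ⟨g, g', hg⟩ := hdec (gf (ι y) (ι z) (ι u + ε))
  have hgu : g = gf y z u := by
    have hφι : ∀ w, map (TrivSqZeroExt.fstHom K K K : DualNumber K →+* K) (ι w) = w := fun w => by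
      ext n
      simp [hfst]
    have hφε : ∀ w, map (TrivSqZeroExt.fstHom K K K : DualNumber K →+* K) (ε * w) = 0 := fun w => by
      ext n
      rw [coeff_map]
      exact hεfst w n
    have := congrArg (map (TrivSqZeroExt.fstHom K K K : DualNumber K →+* K)) hg
    rw [map_gf, map_add, map_add, hφι, hφι, hφι, hφι, hφε, ← mul_one ε, hφε, add_zero,
      add_zero] at this
    exact this.symm
  subst hgu
  refine ⟨g', ?_⟩
  apply hext
  have := gf_eq (ι y) (ι z) (ι u + ε)
  rw [h1, hg] at this
  simp only [map_add, map_mul, map_sub, map_one, map_ofNat, hιX]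
  set v := ι u
  set w := ι (gf y z u)
  set w' := ι g'
  linear_combination this + (4 * v * w * w' * X ^ 2 + 2 * v * w' * (ι y + ι z) * X
    + 2 * v * ε * w' ^ 2 * X ^ 2 + v ^ 2 * w' ^ 2 * X ^ 2 + w * (ι y + ι z) * X
    + 2 * w * ε * w' * X ^ 2 + w ^ 2 * X ^ 2 - w' - w' * (ι y + ι z) * X
    - w' * X ^ 2 * ι (gf y z 1) + ι y * ι z + ε * w' * (ι y + ι z) * X
    + ε ^ 2 * w' ^ 2 * X ^ 2) * hε2

theorem X_sq_mul_gf_one [IsDomain K] {x : K} (hx : 8 * x ≠ 0) :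
    X ^ 2 * gf (C x * (1 - X) ^ 2) ((1 - C x * X) ^ 2) 1 =
      C x * X * X * (1 - C x * X - X) := by
  have hU : IsUnit (1 - C x * X ^ 2 : K⟦X⟧) := by
    rw [isUnit_iff_constantCoeff]
    simp
  obtain ⟨U, hU⟩ := hU.exists_right_inv
  obtain ⟨g', h₀, h₁⟩ := gf_eq_and_deriv (C x * (1 - X) ^ 2) ((1 - C x * X) ^ 2) U
  have hgc := constantCoeff_gf (C x * (1 - X) ^ 2) ((1 - C x * X) ^ 2) U
  have hmc := constantCoeff_gf (C x * (1 - X) ^ 2) ((1 - C x * X) ^ 2) 1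
  have hUc : constantCoeff U = 1 := by
    have := congrArg constantCoeff hU
    simpa using this
  set g := gf (C x * (1 - X) ^ 2) ((1 - C x * X) ^ 2) U
  set m := gf (C x * (1 - X) ^ 2) ((1 - C x * X) ^ 2) 1
  simp only [map_mul, map_pow, map_sub, map_one, constantCoeff_C, constantCoeff_X, hUc] at hgc hmc
  set c : K⟦X⟧ := C x with hc
  by_contra hne
  have hδ : X ^ 2 * m - c * X * X * (1 - c * X - X) ≠ 0 := sub_ne_zero.2 hne
  set δ := X ^ 2 * m - c * X * X * (1 - c * X - X) with hδ_def
  set s : K⟦X⟧ := 1 - U * X * (c * (1 - X) ^ 2 + (1 - c * X) ^ 2) with hs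
  obtain ⟨A₀, hA₀⟩ : ∃ A, A = 2 * U ^ 2 * g - U * m - c * U * s := ⟨_, rfl⟩
  obtain ⟨e₀, he₀⟩ : ∃ e, e = U * (U * (m + c * (1 - c * X - X)) + 2 * c * U * s) := ⟨_, rfl⟩
  obtain ⟨A₁, hA₁⟩ : ∃ A, A = 4 * U * X ^ 2 * g + 2 * U ^ 2 * X ^ 2 * g' - X ^ 2 * m - s +
    (U - 1) * X * (c * (1 - X) ^ 2 + (1 - c * X) ^ 2) := ⟨_, rfl⟩
  obtain ⟨e₁, he₁⟩ : ∃ e, e = 2 * U * (X ^ 2 * m + c * X * X * (1 - c * X - X)) +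
    2 * (2 * U - 1) * s - 2 * U * (U - 1) * X * (c * (1 - X) ^ 2 + (1 - c * X) ^ 2) := ⟨_, rfl⟩
  have h2 : constantCoeff (2 : K⟦X⟧) = 2 := map_ofNat _ 2
  have hX₀ : X ^ 2 * A₀ = 2 * U ^ 2 * X ^ 2 * g - U * X ^ 2 * m - (U - 1) * s := by
    rw [hA₀]
    linear_combination s * hU
  have hX₁ : X ^ 2 * e₀ = U * (U * (X ^ 2 * m + c * X * X * (1 - c * X - X)) +
      2 * (U - 1) * s) := by
    rw [he₀]
    linear_combination -2 * U * s * hU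
  have k₀ : (X ^ 2 * A₀) ^ 2 = δ * (X ^ 2 * e₀) := by
    rw [hX₀, hX₁, hs, hδ_def]
    linear_combination -4 * U ^ 2 * X ^ 2 * h₀ + ((1 - c * X ^ 2) * U - 1) *
      (1 - 2 * (c * X + X - 2 * c * X ^ 2) * U + (c * X - X) ^ 2 * U ^ 2) * hU
  have k₁ : 2 * (X ^ 2 * A₀) * A₁ = δ * e₁ := by
    rw [hX₀, hA₁, he₁, hs, hδ_def]
    linear_combination -4 * U ^ 2 * X ^ 2 * h₁ - 8 * U * X ^ 2 * h₀ +
      (2 * (1 - c * X ^ 2) * (1 - 2 * (c * X + X - 2 * c * X ^ 2) * U + (c * X - X) ^ 2 * U ^ 2) +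
        ((1 - c * X ^ 2) * U - 1) *
          (-2 * (c * X + X - 2 * c * X ^ 2) + 2 * (c * X - X) ^ 2 * U)) * hU
  have he₀c : constantCoeff e₀ = 4 * x := by
    simp [he₀, hs, hc, h2, hUc, hmc]
    ring
  have hA₀c : constantCoeff A₀ = 0 := by
    simp [hA₀, hs, hc, h2, hUc, hmc, hgc]
    ring
  have hA₁c : constantCoeff A₁ = -1 := by
    simp [hA₁, hs, hc, h2, hUc, hmc, hgc]
  have he₁c : constantCoeff e₁ = 2 := by
    simp [he₁, hs, hc, h2, hUc, hmc]
    ring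
  have hX : (X : K⟦X⟧) ^ 2 ≠ 0 := pow_ne_zero _ X_ne_zero
  have hA : A₀ ≠ 0 := by
    rintro rfl
    have : δ * (X ^ 2 * e₀) = 0 := by rw [← k₀]; ring
    rcases mul_eq_zero.1 this with h | h
    · exact hδ h
    · rw [(mul_eq_zero.1 h).resolve_left hX, map_zero] at he₀c
      exact hx (by linear_combination -2 * he₀c)
  have k₂ : A₀ * e₁ = 2 * A₁ * e₀ := by
    refine mul_left_cancel₀ (mul_ne_zero (mul_ne_zero hδ hX) hA) ?_
    linear_combination -(X ^ 2 * A₀ ^ 2) * k₁ + 2 * A₁ * A₀ * k₀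
  have := congrArg constantCoeff k₂
  simp only [map_mul, he₀c, hA₀c, hA₁c, he₁c, map_ofNat] at this
  exact hx (by linear_combination this)

end SortCode

namespace PowerSeries

/-- The coefficient of `x ^ i * t ^ (i + j)`, i.e. of `a ^ i * b ^ j` where `a = x * t`, `b = t`. -/
noncomputable def bicoeff (i j : ℕ) : (Polynomial ℚ)⟦X⟧ →+ ℚ :=
  (Polynomial.lcoeff ℚ i).toAddMonoidHom.comp (coeff (i + j)).toAddMonoidHom

theorem bicoeff_apply (i j : ℕ) (F : (Polynomial ℚ)⟦X⟧) :
    bicoeff i j F = (coeff (i + j) F).coeff i := rfl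

/-- Substitution of `a = x * t`. -/
noncomputable def substLeft : ℚ⟦X⟧ →+* (Polynomial ℚ)⟦X⟧ :=
  (rescale Polynomial.X).comp (map Polynomial.C)

/-- Substitution of `b = t`. -/
noncomputable def substRight : ℚ⟦X⟧ →+* (Polynomial ℚ)⟦X⟧ := map Polynomial.C

theorem substLeft_X : substLeft X = C Polynomial.X * X := by
  simp [substLeft, rescale_X]

theorem substRight_X : substRight X = X := map_X _

theorem bicoeff_mul (i j : ℕ) (f g : ℚ⟦X⟧) :
    bicoeff i j (substLeft f * substRight g) = coeff i f * coeff j g := by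
  rw [bicoeff_apply, coeff_mul, Polynomial.finsetSum_coeff, Finset.sum_eq_single (i, j)]
  · simp [substLeft, substRight, coeff_rescale, mul_assoc]
  · rintro ⟨p, q⟩ h hne
    have hp : p ≠ i := by
      rintro rfl
      simp_all
    simp only [substLeft, substRight, RingHom.comp_apply, coeff_rescale, coeff_map, mul_assoc,
      ← Polynomial.C_mul]
    rw [mul_comm, Polynomial.coeff_C_mul_X_pow, if_neg (Ne.symm hp)]
  · simp

theorem one_sub_pow_mul_invOneSubPow {d e : ℕ} (h : e ≤ d) :
    (1 - X) ^ e * (invOneSubPow ℚ d).val = (invOneSubPow ℚ (d - e)).val := by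
  have := one_sub_pow_mul_invOneSubPow_val_add_eq_invOneSubPow_val ℚ (d - e) e
  rwa [Nat.sub_add_cancel h] at this

theorem coeff_invOneSubPow_succ (d p : ℕ) :
    coeff p (invOneSubPow ℚ (d + 1) : ℚ⟦X⟧) = (d + p).choose d := by
  rw [invOneSubPow_val_succ_eq_mk_add_choose, coeff_mk]

/-- Lagrange inversion for the pair `y = a (1 - b) ^ 2`, `z = b (1 - a) ^ 2`. -/
theorem coeff_mul_sub_four_mul (i j k l : ℕ) :
    coeff i (X ^ k * ((1 - X) ^ (2 * l) * (invOneSubPow ℚ (2 * j) : ℚ⟦X⟧))) *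
      coeff j (X ^ l * ((1 - X) ^ (2 * k) * (invOneSubPow ℚ (2 * i) : ℚ⟦X⟧))) -
    4 * (coeff i (X ^ (k + 1) * ((1 - X) ^ (2 * l) * (invOneSubPow ℚ (2 * j + 1) : ℚ⟦X⟧))) *
      coeff j (X ^ (l + 1) * ((1 - X) ^ (2 * k) * (invOneSubPow ℚ (2 * i + 1) : ℚ⟦X⟧)))) =
    if k = i ∧ l = j then 1 else 0 := by
  rcases lt_or_ge i k with hk | hk
  · rw [coeff_X_pow_mul', coeff_X_pow_mul' _ (k + 1), if_neg (by omega), if_neg (by omega),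
      if_neg (by omega)]
    ring
  rcases lt_or_ge j l with hl | hl
  · rw [coeff_X_pow_mul' _ l, coeff_X_pow_mul' _ (l + 1), if_neg (by omega), if_neg (by omega),
      if_neg (by omega)]
    ring
  obtain ⟨p, rfl⟩ := Nat.exists_eq_add_of_le' hk
  obtain ⟨q, rfl⟩ := Nat.exists_eq_add_of_le' hl
  rw [one_sub_pow_mul_invOneSubPow (by omega), one_sub_pow_mul_invOneSubPow (by omega),
    one_sub_pow_mul_invOneSubPow (by omega), one_sub_pow_mul_invOneSubPow (by omega),
    show 2 * (q + l) - 2 * l = 2 * q by omega, show 2 * (p + k) - 2 * k = 2 * p by omega,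
    show 2 * (q + l) + 1 - 2 * l = 2 * q + 1 by omega,
    show 2 * (p + k) + 1 - 2 * k = 2 * p + 1 by omega, coeff_X_pow_mul, coeff_X_pow_mul]
  rcases p with _ | p
  · rw [coeff_X_pow_mul' _ (k + 1), if_neg (by omega)]
    rcases q with _ | q
    · simp [invOneSubPow_zero]
    · simp [invOneSubPow_zero, coeff_one]
  rcases q with _ | q
  · rw [coeff_X_pow_mul' _ (l + 1), if_neg (by omega)]
    simp [invOneSubPow_zero, coeff_one]
  rw [show p + 1 + k = p + (k + 1) by ring, show q + 1 + l = q + (l + 1) by ring, coeff_X_pow_mul,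
    coeff_X_pow_mul, show 2 * (q + 1) = 2 * q + 1 + 1 by ring,
    show 2 * (p + 1) = 2 * p + 1 + 1 by ring]
  simp only [coeff_invOneSubPow_succ]
  rw [if_neg (by omega)]
  have h₁ := Nat.choose_succ_right_eq (2 * q + 1 + (p + 1)) (2 * q + 1)
  have h₂ := Nat.choose_succ_right_eq (2 * p + 1 + (q + 1)) (2 * p + 1)
  rw [Nat.add_sub_cancel_left] at h₁ h₂
  rw [show 2 * q + 1 + 1 + p = 2 * q + 1 + (p + 1) by ring,
    show 2 * p + 1 + 1 + q = 2 * p + 1 + (q + 1) by ring]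
  have h₁' := congrArg (Nat.cast : ℕ → ℚ) h₁
  have h₂' := congrArg (Nat.cast : ℕ → ℚ) h₂
  push_cast at h₁' h₂'
  have hp : ((p : ℚ) + 1) * (q + 1) ≠ 0 := by positivity
  refine mul_left_cancel₀ hp ?_
  linear_combination (-(((2 * p + 1 + (q + 1)).choose (2 * p + 1 + 1) : ℚ) * (2 * p + 2)) * h₁' -
    ((2 * q + 1 + (p + 1)).choose (2 * q + 1) : ℚ) * (p + 1) * h₂')

end PowerSeries

theorem Multiset.cast_countP_eq_sum {α : Type*} (p : α → Prop) [DecidablePred p]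
    (s : Multiset α) : (s.countP p : ℚ) = (s.map fun a => if p a then 1 else 0).sum := by
  induction s using Multiset.induction_on with
  | empty => simp
  | cons a s ih =>
    rw [Multiset.countP_cons, Multiset.map_cons, Multiset.sum_cons, ← ih]
    push_cast
    ring

namespace SortCode

open PowerSeries

/-- Multiplication by this series turns the coefficient extraction of Lagrange inversion for
`y = a (1 - b) ^ 2`, `z = b (1 - a) ^ 2` into `bicoeff i j`. -/
noncomputable def lagrangeKernel (i j : ℕ) : (Polynomial ℚ)⟦X⟧ :=
  substLeft (invOneSubPow ℚ (2 * j)).val * substRight (invOneSubPow ℚ (2 * i)).val -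
    4 * (substLeft (X * (invOneSubPow ℚ (2 * j + 1)).val) *
      substRight (X * (invOneSubPow ℚ (2 * i + 1)).val))

theorem bicoeff_lagrangeKernel_mul (i j : ℕ) (f g : ℚ⟦X⟧) :
    bicoeff i j (lagrangeKernel i j * (substLeft f * substRight g)) =
      coeff i (f * (invOneSubPow ℚ (2 * j)).val) * coeff j (g * (invOneSubPow ℚ (2 * i)).val) -
      4 * (coeff i (X * f * (invOneSubPow ℚ (2 * j + 1)).val) *
        coeff j (X * g * (invOneSubPow ℚ (2 * i + 1)).val)) := by
  have h : lagrangeKernel i j * (substLeft f * substRight g) =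
      substLeft (f * (invOneSubPow ℚ (2 * j)).val) *
        substRight (g * (invOneSubPow ℚ (2 * i)).val) -
      4 • (substLeft (X * f * (invOneSubPow ℚ (2 * j + 1)).val) *
        substRight (X * g * (invOneSubPow ℚ (2 * i + 1)).val)) := by
    simp only [lagrangeKernel, map_mul, nsmul_eq_mul]
    push_cast
    ring
  rw [h, map_sub, map_nsmul, bicoeff_mul, bicoeff_mul, nsmul_eq_mul]
  push_cast
  rfl

theorem bicoeff_lagrangeKernel_mul_weight (i j k l : ℕ) :
    bicoeff i j (lagrangeKernel i j * (X ^ (k + l) *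
      ((C Polynomial.X * (1 - X) ^ 2) ^ k * ((1 - C Polynomial.X * X) ^ 2) ^ l))) =
      if k = i ∧ l = j then 1 else 0 := by
  have h : (X : (Polynomial ℚ)⟦X⟧) ^ (k + l) *
      ((C Polynomial.X * (1 - X) ^ 2) ^ k * ((1 - C Polynomial.X * X) ^ 2) ^ l) =
      substLeft (X ^ k * (1 - X) ^ (2 * l)) * substRight (X ^ l * (1 - X) ^ (2 * k)) := by
    simp only [map_mul, map_pow, map_sub, map_one, substLeft_X, substRight_X, mul_pow, ← pow_mul,
      pow_add]
    ring
  rw [h, bicoeff_lagrangeKernel_mul, ← coeff_mul_sub_four_mul i j k l]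
  simp only [_root_.pow_succ', mul_assoc]

theorem bicoeff_lagrangeKernel_mul_totalWeight (i j n : ℕ) :
    bicoeff i j (lagrangeKernel i j * (X ^ (n + 2) *
      totalWeight (C Polynomial.X * (1 - X) ^ 2) ((1 - C Polynomial.X * X) ^ 2) 1 (n + 1))) =
      ((all (n + 1)).filter fun c => c.runs = i ∧ c.coruns = j).card := by
  rw [totalWeight, ← Multiset.sum_map_mul_left, ← Multiset.sum_map_mul_left, map_multiset_sum,
    Multiset.map_map, ← Multiset.countP_eq_card_filter, Multiset.cast_countP_eq_sum]
  refine congrArg Multiset.sum (Multiset.map_congr rfl fun c hc => ?_)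
  rw [Function.comp_apply, weight, one_pow, one_mul, ← runs_add_coruns hc,
    bicoeff_lagrangeKernel_mul_weight]

theorem bicoeff_lagrangeKernel_mul_gf {i j n : ℕ} (h : i + j = n + 2) :
    bicoeff i j (lagrangeKernel i j * (X ^ 2 *
      gf (C Polynomial.X * (1 - X) ^ 2) ((1 - C Polynomial.X * X) ^ 2) 1)) =
      ((all (n + 1)).filter fun c => c.runs = i).card := by
  have hcard : ((all (n + 1)).filter fun c => c.runs = i).card =
      ((all (n + 1)).filter fun c => c.runs = i ∧ c.coruns = j).card := by
    refine congrArg _ (Multiset.filter_congr fun c hc => ?_)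
    have := runs_add_coruns hc
    omega
  rw [hcard, ← bicoeff_lagrangeKernel_mul_totalWeight, ← mul_assoc, gf,
    ← diagHom_C (lagrangeKernel i j * X ^ 2), ← map_mul, bicoeff_apply, coeff_diagHom,
    Polynomial.finsetSum_coeff]
  have hterm : ∀ pq ∈ HasAntidiagonal.antidiagonal (i + j),
      (coeff pq.1 (coeff pq.2 (C (lagrangeKernel i j * X ^ 2) *
        sizeGF (C Polynomial.X * (1 - X) ^ 2) ((1 - C Polynomial.X * X) ^ 2) 1))).coeff i =
      bicoeff i j (lagrangeKernel i j * (X ^ (pq.2 + 2) * totalWeight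
        (C Polynomial.X * (1 - X) ^ 2) ((1 - C Polynomial.X * X) ^ 2) 1 (pq.2 + 1))) := by
    rintro ⟨p, q⟩ hpq
    rw [HasAntidiagonal.mem_antidiagonal] at hpq
    rw [bicoeff_apply, ← hpq, coeff_C_mul, sizeGF, coeff_mk, ← coeff_X_pow_mul _ q p]
    have hcomm : ∀ T : (Polynomial ℚ)⟦X⟧,
        X ^ q * (lagrangeKernel i j * X ^ 2 * T) = lagrangeKernel i j * (X ^ (q + 2) * T) :=
      fun T => by ring
    rw [hcomm]
  rw [Finset.sum_congr rfl hterm, Finset.sum_eq_single (2, n)]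
  · rintro ⟨p, q⟩ hpq hne
    rw [HasAntidiagonal.mem_antidiagonal] at hpq
    rw [bicoeff_lagrangeKernel_mul_totalWeight, Nat.cast_eq_zero, Multiset.card_eq_zero,
      Multiset.filter_eq_nil]
    rintro c hc ⟨h₁, h₂⟩
    have := runs_add_coruns hc
    simp only [ne_eq, Prod.mk.injEq] at hne hpq
    omega
  · intro hn
    rw [HasAntidiagonal.mem_antidiagonal] at hn
    omega

theorem coeff_X_pow_succ_mul_invOneSubPow (d e i : ℕ) :
    ((d : ℚ) + i - e) * coeff i (X ^ (e + 1) * (invOneSubPow ℚ (d + 1)).val) =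
      (i - e) * coeff i (X ^ e * (invOneSubPow ℚ (d + 1)).val) := by
  rcases lt_trichotomy i e with h | rfl | h
  · rw [coeff_X_pow_mul', coeff_X_pow_mul', if_neg (by omega), if_neg (by omega)]
    ring
  · rw [coeff_X_pow_mul', if_neg (by omega)]
    ring
  · obtain ⟨p, rfl⟩ := Nat.exists_eq_add_of_le' h
    rw [coeff_X_pow_mul, show p + (e + 1) = p + 1 + e by ring, coeff_X_pow_mul,
      coeff_invOneSubPow_succ, coeff_invOneSubPow_succ]
    have := Nat.add_one_mul_choose_eq (d + p) p
    rw [Nat.choose_symm_add, Nat.choose_symm_add (b := p + 1)]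
    have h' := congrArg (Nat.cast : ℕ → ℚ) this
    push_cast [Nat.succ_eq_add_one] at h' ⊢
    rw [show d + (p + 1) = d + p + 1 by ring]
    linear_combination h'

theorem coeff_mul_sub_mul_invOneSubPow (d e i : ℕ) :
    coeff i (X ^ e * (invOneSubPow ℚ d).val) =
      coeff i (X ^ e * (invOneSubPow ℚ (d + 1)).val) -
        coeff i (X ^ (e + 1) * (invOneSubPow ℚ (d + 1)).val) := by
  have h := one_sub_pow_mul_invOneSubPow (Nat.le_add_left 1 d)
  rw [Nat.add_sub_cancel] at h
  rw [← h, ← map_sub]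
  congr 1
  ring

theorem card_filter_runs {i j n : ℕ} (h : i + j = n) :
    (((all (n + 1)).filter fun c => c.runs = i + 1).card : ℚ) =
      ((2 * i + j + 1)! * (2 * j + i + 1)! : ℚ) /
        ((i + 1)! * (j + 1)! * (2 * i + 1)! * (2 * j + 1)!) := by
  rw [← bicoeff_lagrangeKernel_mul_gf (j := j + 1) (by omega), X_sq_mul_gf_one]
  swap
  · exact mul_ne_zero (by norm_num) Polynomial.X_ne_zero
  have hsplit : lagrangeKernel (i + 1) (j + 1) *
      (C Polynomial.X * X * X * (1 - C Polynomial.X * X - X)) =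
      lagrangeKernel (i + 1) (j + 1) * (substLeft X * substRight X) -
      lagrangeKernel (i + 1) (j + 1) * (substLeft (X ^ 2) * substRight X) -
      lagrangeKernel (i + 1) (j + 1) * (substLeft X * substRight (X ^ 2)) := by
    simp only [map_pow, substLeft_X, substRight_X]
    ring
  rw [hsplit, map_sub, map_sub, bicoeff_lagrangeKernel_mul, bicoeff_lagrangeKernel_mul,
    bicoeff_lagrangeKernel_mul]
  have hX : (X : ℚ⟦X⟧) = X ^ 1 := (pow_one _).symm
  have hX₂ : (X : ℚ⟦X⟧) * X = X ^ 2 := (sq X).symm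
  have hX₃ : (X : ℚ⟦X⟧) * X ^ 2 = X ^ 3 := (_root_.pow_succ' X 2).symm
  rw [hX₃, hX₂, hX]
  simp only [← pow_mul, one_mul, coeff_mul_sub_mul_invOneSubPow (2 * (j + 1)),
    coeff_mul_sub_mul_invOneSubPow (2 * (i + 1)), Nat.reduceAdd]
  have hc₂ := coeff_X_pow_succ_mul_invOneSubPow (2 * (j + 1)) 1 (i + 1)
  have hc₃ := coeff_X_pow_succ_mul_invOneSubPow (2 * (j + 1)) 2 (i + 1)
  have hd₂ := coeff_X_pow_succ_mul_invOneSubPow (2 * (i + 1)) 1 (j + 1)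
  have hd₃ := coeff_X_pow_succ_mul_invOneSubPow (2 * (i + 1)) 2 (j + 1)
  have hc₁ := coeff_X_pow_mul (invOneSubPow ℚ (2 * (j + 1) + 1)).val 1 i
  have hd₁ := coeff_X_pow_mul (invOneSubPow ℚ (2 * (i + 1) + 1)).val 1 j
  rw [coeff_invOneSubPow_succ, Nat.cast_add_choose] at hc₁ hd₁
  simp only [Nat.reduceAdd] at hc₂ hc₃ hd₂ hd₃
  generalize coeff (i + 1) (X ^ 1 * (invOneSubPow ℚ (2 * (j + 1) + 1)).val) = c₁ at *
  generalize coeff (i + 1) (X ^ 2 * (invOneSubPow ℚ (2 * (j + 1) + 1)).val) = c₂ at *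
  generalize coeff (i + 1) (X ^ 3 * (invOneSubPow ℚ (2 * (j + 1) + 1)).val) = c₃ at *
  generalize coeff (j + 1) (X ^ 1 * (invOneSubPow ℚ (2 * (i + 1) + 1)).val) = d₁ at *
  generalize coeff (j + 1) (X ^ 2 * (invOneSubPow ℚ (2 * (i + 1) + 1)).val) = d₂ at *
  generalize coeff (j + 1) (X ^ 3 * (invOneSubPow ℚ (2 * (i + 1) + 1)).val) = d₃ at *
  push_cast at hc₂ hc₃ hd₂ hd₃
  have hf : ∀ m : ℕ, ((m + 1)! : ℚ) = (m + 1) * m ! := fun m => by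
    rw [Nat.factorial_succ]
    push_cast
    rfl
  rw [show 2 * (j + 1) + i = 2 * j + i + 1 + 1 by ring, show 2 * (j + 1) = 2 * j + 1 + 1 by ring,
    hf, hf (2 * j + 1)] at hc₁
  rw [show 2 * (i + 1) + j = 2 * i + j + 1 + 1 by ring, show 2 * (i + 1) = 2 * i + 1 + 1 by ring,
    hf, hf (2 * i + 1)] at hd₁
  rw [hf i, hf j]
  have hc₂' : c₂ = i * c₁ / (2 * j + i + 2) := by
    rw [eq_div_iff (by positivity)]
    linear_combination hc₂
  have hc₃' : c₃ = (i - 1) * c₂ / (2 * j + i + 1) := by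
    rw [eq_div_iff (by positivity)]
    linear_combination hc₃
  have hd₂' : d₂ = j * d₁ / (2 * i + j + 2) := by
    rw [eq_div_iff (by positivity)]
    linear_combination hd₂
  have hd₃' : d₃ = (j - 1) * d₂ / (2 * i + j + 1) := by
    rw [eq_div_iff (by positivity)]
    linear_combination hd₃
  rw [hc₃', hd₃', hc₂', hd₂', hc₁, hd₁]
  push_cast
  have := Nat.cast_ne_zero (R := ℚ).2 i.factorial_ne_zero
  have := Nat.cast_ne_zero (R := ℚ).2 j.factorial_ne_zero
  have := Nat.cast_ne_zero (R := ℚ).2 (2 * i + 1).factorial_ne_zero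
  have := Nat.cast_ne_zero (R := ℚ).2 (2 * j + 1).factorial_ne_zero
  have h₁ : (2 * j + i + 2 : ℚ) ≠ 0 := by positivity
  have h₂ : (2 * j + i + 1 : ℚ) ≠ 0 := by positivity
  have h₃ : (2 * i + j + 2 : ℚ) ≠ 0 := by positivity
  have h₄ : (2 * i + j + 1 : ℚ) ≠ 0 := by positivity
  field_simp
  ring

end SortCode

/-- `W_3(n) ≤ ∑_{k=1}^{⌊(n+1)/2⌋} W_2(n, k−1) · C(2n−2k, n−1)`, where
`W_2(n, k−1) = (n+k−1)!(2n−k)!/(k!(n+1−k)!(2k−1)!(2n−2k+1)!)`. -/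
theorem stmt_9 (n : ℕ) (hn : 1 ≤ n) :
    ({p : List ℕ | p.Perm (List.range' 1 n) ∧
        stackSort^[3] p = List.range' 1 n}.ncard : ℚ) ≤
      ∑ k ∈ Finset.Icc 1 ((n + 1) / 2),
        (((n + k - 1)! * (2 * n - k)! : ℚ) /
            ((k)! * (n + 1 - k)! * (2 * k - 1)! * (2 * n - 2 * k + 1)!)) *
          (Nat.choose (2 * n - 2 * k) (n - 1) : ℚ) := by
  refine (Nat.cast_le.2 (SortCode.ncard_le_card_all n hn)).trans (le_of_eq ?_)
  rw [Nat.cast_sum]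
  refine Finset.sum_congr rfl fun k hk => ?_
  rw [Finset.mem_Icc] at hk
  obtain ⟨i, rfl⟩ := Nat.exists_eq_add_of_le' hk.1
  obtain ⟨j, rfl⟩ := Nat.exists_eq_add_of_le' (show i + 1 ≤ n by omega)
  rw [Nat.cast_mul, show j + (i + 1) = i + j + 1 by ring, SortCode.card_filter_runs rfl,
    show i + j + 1 + (i + 1) - 1 = 2 * i + j + 1 by omega,
    show 2 * (i + j + 1) - (i + 1) = 2 * j + i + 1 by omega,
    show i + j + 1 + 1 - (i + 1) = j + 1 by omega,
    show 2 * (i + 1) - 1 = 2 * i + 1 by omega,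
    show 2 * (i + j + 1) - 2 * (i + 1) + 1 = 2 * j + 1 by omega]
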